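/- arXiv:2509.11805 — 7 statements merged into one kernel-verified Lean document; each statement's English description precedes it below -/
import Mathlib

section
/- There exists an effectively computable constant N > 0 such that for all integers n > N and all integers l with 2 ≤ l and l ≤ n/(10·log n), the ultra-log-concavity inequality (a(n,l-1)/C(n-3,l-1))² ≥ (a(n,l-2)/C(n-3,l-2))·(a(n,l)/C(n-3,l)) holds, where C(n-3,j) denotes the binomial coefficient. -/
/-!
The formula for `a n l` is dominated by its `k = l` term `T n l = (l+1)^(l+n-1) / (l+1)!`.

The term with `k = l - r`, `r ≥ 1`, carries the factor
`((l-r+1)/(l+1))^(n-1) ≤ exp (-r (n-1)/(l+1)) ≤ n^(-9r)`, because `l` is at most about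
`n / (10 log n)`; on the other hand `|C(n,k,i)| ≤ n^(3i)`, so that the sum over tuples is at most
`n^(5r)`. Hence `|a n l - T n l| ≤ n^(-3) T n l` (`abs_a_sub_T_le`).

For the main terms, divided by the binomial coefficients, Bernoulli's inequality applied to
`((p+2)^2 / ((p+1)(p+3)))^(p+n-1)` gives ultra-log-concavity with the extra factor `1 + 1/n`
(`T_ultra`), which absorbs the relative errors `n^(-3)`.
-/

open Finset Real

/-- The constant `C(n,k,i)` from Aluffi–Marcolli–Nascimento. -/
noncomputable def Cnki (n k i : ℕ) : ℝ :=
  ((-1 : ℝ) ^ i * (2 * (k : ℝ) * i + n * i + k + n - 1) + (k : ℝ) - i) / (i * (i + 1))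
    - (1 / ((i : ℝ) * (k + 1) ^ i)) * ∑ j ∈ Finset.range (k + n - 1), (j : ℝ) ^ i

/-- The finite set of `m`-tuples of positive integers summing to `N`. -/
def posTuples (m N : ℕ) : Finset (Fin m → ℕ) :=
  (Fintype.piFinset fun _ => Finset.Icc 1 N).filter fun f => ∑ j, f j = N

/-- `a n l = rk H^{2l}(M̄_{0,n})`, via the Aluffi–Marcolli–Nascimento formula. -/
noncomputable def a (n l : ℕ) : ℝ :=
  ∑ k ∈ Finset.range (l + 1),
    ((k + 1 : ℝ) ^ (k + n - 1) / (Nat.factorial (k + 1) : ℝ)) *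
      ∑ m ∈ Finset.range (l - k + 1),
        (1 / (Nat.factorial m : ℝ)) *
          ∑ f ∈ posTuples m (l - k), ∏ j, Cnki n k (f j)

/-- The `k = l` term of the formula for `a n l`. -/
noncomputable def T (n l : ℕ) : ℝ :=
  (l + 1 : ℝ) ^ (l + n - 1) / (Nat.factorial (l + 1) : ℝ)

lemma T_pos (n l : ℕ) : 0 < T n l := by
  unfold T; positivity

/-- The coefficient of `T n k` in the formula for `a n (k + r)`. -/
noncomputable def B (n k r : ℕ) : ℝ :=
  ∑ m ∈ Finset.range (r + 1), (1 / (Nat.factorial m : ℝ)) *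
    ∑ f ∈ posTuples m r, ∏ j, Cnki n k (f j)

lemma a_eq_sum (n l : ℕ) : a n l = ∑ k ∈ Finset.range (l + 1), T n k * B n k (l - k) := rfl

lemma B_zero (n k : ℕ) : B n k 0 = 1 := by
  simp [B, posTuples]

lemma abs_Cnki_le {n k i : ℕ} (hn : 1000 ≤ n) (hk : k ≤ n) (hi : 1 ≤ i) :
    |Cnki n k i| ≤ (n : ℝ) ^ (3 * i) := by
  have hn' : (1000 : ℝ) ≤ n := by exact_mod_cast hn
  have hk' : (k : ℝ) ≤ n := by exact_mod_cast hk
  have hi' : (1 : ℝ) ≤ i := by exact_mod_cast hi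
  have hk0 : (0 : ℝ) ≤ k := by positivity
  have h1 : |((-1 : ℝ) ^ i * (2 * (k : ℝ) * i + n * i + k + n - 1) + (k : ℝ) - i) / (i * (i + 1))|
      ≤ 6 * n := by
    rw [abs_div, abs_of_pos (show (0 : ℝ) < i * (i + 1) by positivity),
      div_le_iff₀ (by positivity)]
    have hX : 0 ≤ 2 * (k : ℝ) * i + n * i + k + n - 1 := by
      have : 0 ≤ 2 * (k : ℝ) * i + n * i := by positivity
      linarith
    have hki : (k : ℝ) * i ≤ n * i := by gcongr
    have hni : (n : ℝ) ≤ n * i := by nlinarith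
    have hii : (n : ℝ) * i ≤ n * i * i := by
      have : 0 ≤ (n : ℝ) * i := by positivity
      nlinarith
    have hin : (i : ℝ) ≤ n * i := by nlinarith
    rcases neg_one_pow_eq_or ℝ i with h | h <;> rw [h, abs_le] <;> constructor <;> nlinarith
  have h2 : |(1 / ((i : ℝ) * (k + 1) ^ i)) * ∑ j ∈ Finset.range (k + n - 1), (j : ℝ) ^ i|
      ≤ (2 * n : ℝ) ^ (i + 1) := by
    have hs0 : 0 ≤ ∑ j ∈ Finset.range (k + n - 1), (j : ℝ) ^ i :=
      Finset.sum_nonneg fun j _ => by positivity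
    have hs : ∑ j ∈ Finset.range (k + n - 1), (j : ℝ) ^ i ≤ (2 * n : ℝ) ^ (i + 1) := by
      calc ∑ j ∈ Finset.range (k + n - 1), (j : ℝ) ^ i
          ≤ ∑ j ∈ Finset.range (k + n - 1), (2 * n : ℝ) ^ i := by
            refine Finset.sum_le_sum fun j hj => ?_
            have : j ≤ 2 * n := by have := Finset.mem_range.1 hj; omega
            gcongr
            exact_mod_cast this
        _ = ((k + n - 1 : ℕ) : ℝ) * (2 * n : ℝ) ^ i := by simp
        _ ≤ (2 * n) * (2 * n : ℝ) ^ i := by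
            gcongr
            have : k + n - 1 ≤ 2 * n := by omega
            exact_mod_cast this
        _ = _ := by ring
    rw [abs_of_nonneg (by positivity)]
    refine le_trans ?_ hs
    refine mul_le_of_le_one_left hs0 ?_
    rw [div_le_one (by positivity)]
    have : (1 : ℝ) ≤ (k + 1) ^ i := one_le_pow₀ (by linarith)
    nlinarith
  have h3 : (2 * n : ℝ) ^ (i + 1) ≤ (4 * n ^ 2 : ℝ) ^ i := by
    calc (2 * n : ℝ) ^ (i + 1) ≤ (2 * n : ℝ) ^ (2 * i) :=
          pow_le_pow_right₀ (by linarith) (by omega)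
      _ = _ := by rw [pow_mul]; congr 1; ring
  have h4 : (6 * n : ℝ) ≤ (4 * n ^ 2 : ℝ) ^ i := by
    calc (6 * n : ℝ) ≤ 4 * n ^ 2 := by nlinarith
      _ ≤ _ := le_self_pow₀ (by nlinarith) (by omega)
  calc |Cnki n k i| ≤ 6 * n + (2 * n : ℝ) ^ (i + 1) := by
        unfold Cnki
        exact (abs_sub _ _).trans (add_le_add h1 h2)
    _ ≤ 2 * (4 * n ^ 2 : ℝ) ^ i := by linarith
    _ ≤ 2 ^ i * (4 * n ^ 2 : ℝ) ^ i := by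
        gcongr
        exact le_self_pow₀ (by norm_num) (by omega)
    _ = (8 * n ^ 2 : ℝ) ^ i := by rw [← mul_pow]; ring
    _ ≤ (n ^ 3 : ℝ) ^ i := by
        gcongr
        nlinarith [sq_nonneg (n : ℝ)]
    _ = _ := by rw [pow_mul]

lemma abs_B_le {n k r : ℕ} (hn : 1000 ≤ n) (hk : k ≤ n) (hr : 1 ≤ r) (hrn : r < n) :
    |B n k r| ≤ (n : ℝ) ^ (5 * r) := by
  have hn' : (1 : ℝ) ≤ n := by exact_mod_cast (by omega : 1 ≤ n)
  have hterm : ∀ m ∈ Finset.range (r + 1), |(1 / (Nat.factorial m : ℝ)) *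
      ∑ f ∈ posTuples m r, ∏ j, Cnki n k (f j)| ≤ (n : ℝ) ^ r * (n : ℝ) ^ (3 * r) := by
    intro m hm
    have hm' : m ≤ r := by have := Finset.mem_range.1 hm; omega
    have hprod : ∀ f ∈ posTuples m r, |∏ j, Cnki n k (f j)| ≤ (n : ℝ) ^ (3 * r) := by
      intro f hf
      simp only [posTuples, Finset.mem_filter, Fintype.mem_piFinset, Finset.mem_Icc] at hf
      rw [Finset.abs_prod, ← hf.2, Finset.mul_sum, ← Finset.prod_pow_eq_pow_sum]
      exact Finset.prod_le_prod (fun _ _ => abs_nonneg _)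
        fun j _ => abs_Cnki_le hn hk (hf.1 j).1
    have hcard : ((posTuples m r).card : ℝ) ≤ (n : ℝ) ^ r := by
      have h1 : (posTuples m r).card ≤ r ^ m := by
        refine (Finset.card_filter_le _ _).trans ?_
        simp [Fintype.card_piFinset]
      calc ((posTuples m r).card : ℝ) ≤ (r : ℝ) ^ m := by exact_mod_cast h1
        _ ≤ (n : ℝ) ^ m := by gcongr
        _ ≤ (n : ℝ) ^ r := pow_le_pow_right₀ hn' hm'
    have hsum : |∑ f ∈ posTuples m r, ∏ j, Cnki n k (f j)| ≤ (n : ℝ) ^ r * (n : ℝ) ^ (3 * r) := by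
      calc _ ≤ ∑ f ∈ posTuples m r, |∏ j, Cnki n k (f j)| := Finset.abs_sum_le_sum_abs _ _
        _ ≤ (posTuples m r).card • (n : ℝ) ^ (3 * r) := Finset.sum_le_card_nsmul _ _ _ hprod
        _ ≤ _ := by rw [nsmul_eq_mul]; gcongr
    rw [abs_mul, abs_of_nonneg (by positivity : (0 : ℝ) ≤ 1 / (Nat.factorial m : ℝ))]
    refine (mul_le_of_le_one_left (abs_nonneg _) ?_).trans hsum
    rw [div_le_one (by positivity)]
    exact_mod_cast Nat.factorial_pos m
  calc |B n k r| ≤ ∑ m ∈ Finset.range (r + 1), |(1 / (Nat.factorial m : ℝ)) *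
      ∑ f ∈ posTuples m r, ∏ j, Cnki n k (f j)| := Finset.abs_sum_le_sum_abs _ _
    _ ≤ (Finset.range (r + 1)).card • ((n : ℝ) ^ r * (n : ℝ) ^ (3 * r)) :=
        Finset.sum_le_card_nsmul _ _ _ hterm
    _ = ((r + 1 : ℕ) : ℝ) * ((n : ℝ) ^ r * (n : ℝ) ^ (3 * r)) := by simp
    _ ≤ (n : ℝ) ^ r * ((n : ℝ) ^ r * (n : ℝ) ^ (3 * r)) := by
        gcongr
        calc ((r + 1 : ℕ) : ℝ) ≤ (n : ℝ) := by exact_mod_cast hrn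
          _ ≤ (n : ℝ) ^ r := le_self_pow₀ hn' (by omega)
    _ = _ := by ring

/-- The exponential decay of the main terms below `l`: the powers
`(k+1)^k / (l+1)^l` and the factorials `(l+1)! / (k+1)!` compensate each other, and
`((k+1)/(l+1))^(n-1)` supplies the decay. -/
lemma T_decay {n k r : ℕ} (hn : 1000 ≤ n)
    (h : 9 * ((k + r : ℕ) + 1 : ℝ) * Real.log n ≤ n - 1) :
    T n k * (n : ℝ) ^ (9 * r) ≤ T n (k + r) := by
  have hn0 : (0 : ℝ) < n := by exact_mod_cast (by omega : 0 < n)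
  have hl0 : (0 : ℝ) < (k + r : ℕ) + 1 := by positivity
  obtain ⟨s, rfl⟩ : ∃ s, n = s + 1 := ⟨n - 1, by omega⟩
  have hbase : ((k : ℝ) + 1) ^ s * ((s + 1 : ℕ) : ℝ) ^ (9 * r) ≤ ((k + r : ℕ) + 1 : ℝ) ^ s := by
    have h1 : (k : ℝ) + 1 ≤ ((k + r : ℕ) + 1 : ℝ) * Real.exp (-(r / ((k + r : ℕ) + 1))) := by
      have := Real.add_one_le_exp (-((r : ℝ) / ((k + r : ℕ) + 1)))
      calc (k : ℝ) + 1 = ((k + r : ℕ) + 1 : ℝ) * (-((r : ℝ) / ((k + r : ℕ) + 1)) + 1) := by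
            field_simp; push_cast; ring
        _ ≤ _ := by gcongr
    have h2 : ((s + 1 : ℕ) : ℝ) ^ (9 * r) = Real.exp (9 * r * Real.log (s + 1 : ℕ)) := by
      rw [← Real.rpow_natCast, Real.rpow_def_of_pos hn0]
      congr 1; push_cast; ring
    have h3 : ((k : ℝ) + 1) ^ s ≤
        ((k + r : ℕ) + 1 : ℝ) ^ s * Real.exp (-(s * (r / ((k + r : ℕ) + 1)))) := by
      calc _ ≤ (((k + r : ℕ) + 1 : ℝ) * Real.exp (-(r / ((k + r : ℕ) + 1)))) ^ s := by gcongr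
        _ = _ := by rw [mul_pow, ← Real.exp_nat_mul]; congr 2; ring
    have h4 : Real.exp (-(s * (r / ((k + r : ℕ) + 1 : ℝ)))) *
        Real.exp (9 * r * Real.log (s + 1 : ℕ)) ≤ 1 := by
      rw [← Real.exp_add]
      apply Real.exp_le_one_iff.2
      have : 9 * r * Real.log (s + 1 : ℕ) ≤ s * (r / ((k + r : ℕ) + 1 : ℝ)) := by
        rw [mul_div_assoc', le_div_iff₀ hl0]
        have h5 : 9 * ((k + r : ℕ) + 1 : ℝ) * Real.log (s + 1 : ℕ) ≤ s := by
          refine h.trans (le_of_eq ?_); push_cast; ring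
        have := mul_le_mul_of_nonneg_right h5 (by positivity : (0 : ℝ) ≤ r)
        linarith
      linarith
    rw [h2]
    calc _ ≤ ((k + r : ℕ) + 1 : ℝ) ^ s * Real.exp (-(s * (r / ((k + r : ℕ) + 1)))) *
          Real.exp (9 * r * Real.log (s + 1 : ℕ)) := by gcongr
      _ ≤ ((k + r : ℕ) + 1 : ℝ) ^ s * 1 := by rw [mul_assoc]; gcongr
      _ = _ := mul_one _
  have hfact : ((k + r + 1).factorial : ℝ) ≤ ((k + 1).factorial : ℝ) * ((k + r : ℕ) + 1 : ℝ) ^ r := by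
    have h6 : (k + 1 + r).factorial ≤ (k + 1).factorial * (k + 1 + r) ^ r := by
      rw [← Nat.factorial_mul_ascFactorial]
      exact Nat.mul_le_mul_left _ (Nat.ascFactorial_le_pow_add _ _)
    rw [show k + r + 1 = k + 1 + r by ring]
    calc ((k + 1 + r).factorial : ℝ) ≤ (((k + 1).factorial * (k + 1 + r) ^ r : ℕ) : ℝ) := by
          exact_mod_cast h6
      _ = _ := by push_cast; ring
  have hpow : ((k : ℝ) + 1) ^ k ≤ ((k + r : ℕ) + 1 : ℝ) ^ k := by
    gcongr; linarith
  unfold T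
  simp only [show k + (s + 1) - 1 = k + s by omega, show k + r + (s + 1) - 1 = k + r + s by omega]
  rw [div_mul_eq_mul_div, div_le_div_iff₀ (by positivity) (by positivity)]
  calc ((k : ℝ) + 1) ^ (k + s) * ((s + 1 : ℕ) : ℝ) ^ (9 * r) * ((k + r + 1).factorial : ℝ)
      = ((k : ℝ) + 1) ^ k * (((k : ℝ) + 1) ^ s * ((s + 1 : ℕ) : ℝ) ^ (9 * r)) *
        ((k + r + 1).factorial : ℝ) := by ring
    _ ≤ ((k + r : ℕ) + 1 : ℝ) ^ k * ((k + r : ℕ) + 1 : ℝ) ^ s *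
        (((k + 1).factorial : ℝ) * ((k + r : ℕ) + 1 : ℝ) ^ r) := by gcongr
    _ = _ := by ring

lemma abs_a_sub_T_le {n l : ℕ} (hn : 1000 ≤ n) (hl : l < n)
    (h : 9 * ((l : ℝ) + 1) * Real.log n ≤ n - 1) :
    |a n l - T n l| ≤ T n l / (n : ℝ) ^ 3 := by
  have hn1 : (1 : ℝ) ≤ n := by exact_mod_cast (by omega : 1 ≤ n)
  have hT := T_pos n l
  rw [a_eq_sum, Finset.sum_range_succ, Nat.sub_self, B_zero, mul_one, add_sub_cancel_right]
  have hterm : ∀ k ∈ Finset.range l, |T n k * B n k (l - k)| ≤ T n l / (n : ℝ) ^ 4 := by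
    intro k hk
    obtain ⟨r, rfl⟩ : ∃ r, l = k + r := ⟨l - k, by have := Finset.mem_range.1 hk; omega⟩
    have hr : 1 ≤ r := by have := Finset.mem_range.1 hk; omega
    rw [Nat.add_sub_cancel_left, abs_mul, abs_of_pos (T_pos n k),
      le_div_iff₀ (by positivity)]
    have hd := T_decay (n := n) (k := k) (r := r) hn (by exact_mod_cast h)
    have hB := abs_B_le (n := n) (k := k) (r := r) hn (by omega) hr (by omega)
    have h4 : (n : ℝ) ^ 4 ≤ (n : ℝ) ^ (4 * r) := pow_le_pow_right₀ hn1 (by omega)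
    have := (T_pos n k).le
    calc T n k * |B n k r| * (n : ℝ) ^ 4 ≤ T n k * (n : ℝ) ^ (5 * r) * (n : ℝ) ^ (4 * r) := by gcongr
      _ = T n k * (n : ℝ) ^ (9 * r) := by ring
      _ ≤ _ := hd
  calc _ ≤ ∑ k ∈ Finset.range l, |T n k * B n k (l - k)| := Finset.abs_sum_le_sum_abs _ _
    _ ≤ (Finset.range l).card • (T n l / (n : ℝ) ^ 4) := Finset.sum_le_card_nsmul _ _ _ hterm
    _ = (l : ℝ) * (T n l / (n : ℝ) ^ 4) := by simp
    _ ≤ n * (T n l / (n : ℝ) ^ 4) := by gcongr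
    _ = _ := by field_simp

/-- Log-concavity of the main terms, from Bernoulli's inequality
`((p+2)^2 / ((p+1)(p+3)))^e ≥ 1 + e / ((p+1)(p+3))` with `e = p + n - 1`. -/
lemma T_log_concave {n p : ℕ} (hn : 1 ≤ n) :
    T n p * T n (p + 2) * ((p + 2) * ((p + 1) * (p + 3) + (p + n - 1))) ≤
      T n (p + 1) ^ 2 * ((p + 1) * (p + 3) ^ 2) := by
  obtain ⟨s, rfl⟩ : ∃ s, n = s + 1 := ⟨n - 1, by omega⟩
  have hb : 1 + ((p + s : ℕ) : ℝ) * (1 / (((p : ℝ) + 1) * (p + 3))) ≤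
      (1 + 1 / (((p : ℝ) + 1) * (p + 3))) ^ (p + s) :=
    one_add_mul_le_pow (by have : (0 : ℝ) ≤ 1 / (((p : ℝ) + 1) * (p + 3)) := by positivity
                           linarith) _
  have hb' : (((p : ℝ) + 1) ^ (p + s) * ((p : ℝ) + 3) ^ (p + s)) *
      ((p + 1) * (p + 3) + (p + s)) ≤ (((p : ℝ) + 2) ^ (p + s)) ^ 2 * ((p + 1) * (p + 3)) := by
    have e1 : (1 + 1 / (((p : ℝ) + 1) * (p + 3))) = (p + 2) ^ 2 / ((p + 1) * (p + 3)) := by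
      field_simp; ring
    have e2 : 1 + ((p + s : ℕ) : ℝ) * (1 / (((p : ℝ) + 1) * (p + 3))) =
        ((p + 1) * (p + 3) + (p + s)) / ((p + 1) * (p + 3)) := by
      push_cast; field_simp
    rw [e1, e2, div_pow, div_le_div_iff₀ (by positivity) (by positivity), mul_pow, ← pow_mul,
      mul_comm 2, pow_mul] at hb
    linarith
  have hf1 : ((p + 1 + 1).factorial : ℝ) = (p + 2) * (p + 1).factorial := by
    rw [Nat.factorial_succ (p + 1)]; push_cast; ring
  have hf2 : ((p + 2 + 1).factorial : ℝ) = (p + 3) * ((p + 2) * (p + 1).factorial) := by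
    rw [Nat.factorial_succ (p + 2), Nat.factorial_succ (p + 1)]; push_cast; ring
  have t0 : T (s + 1) p = ((p : ℝ) + 1) ^ (p + s) / (p + 1).factorial := by
    unfold T; rw [show p + (s + 1) - 1 = p + s by omega]
  have t1 : T (s + 1) (p + 1) = ((p : ℝ) + 2) ^ (p + s) / (p + 1).factorial := by
    unfold T
    rw [show p + 1 + (s + 1) - 1 = p + s + 1 by omega, hf1, pow_succ,
      show ((p + 1 : ℕ) : ℝ) + 1 = p + 2 by push_cast; ring]
    field_simp
  have t2 : T (s + 1) (p + 2) =
      ((p : ℝ) + 3) ^ (p + s) * (p + 3) / ((p + 2) * (p + 1).factorial) := by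
    unfold T
    rw [show p + 2 + (s + 1) - 1 = p + s + 1 + 1 by omega, hf2, pow_succ, pow_succ,
      show ((p + 2 : ℕ) : ℝ) + 1 = p + 3 by push_cast; ring]
    field_simp
  rw [t0, t1, t2]
  set F : ℝ := ((p + 1).factorial : ℝ) with hF
  have hF0 : 0 < F := by positivity
  calc _ = ((((p : ℝ) + 1) ^ (p + s) * ((p : ℝ) + 3) ^ (p + s)) *
        ((p + 1) * (p + 3) + (p + s))) * ((p + 3) / F ^ 2) := by
        push_cast; field_simp; ring
    _ ≤ ((((p : ℝ) + 2) ^ (p + s)) ^ 2 * ((p + 1) * (p + 3))) * ((p + 3) / F ^ 2) := by gcongr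
    _ = _ := by field_simp

/-- Ultra-log-concavity of the main terms, with a factor `1 + 1/n` to spare. -/
lemma T_ultra {n p : ℕ} (hn : 1000 ≤ n) (hp : 9 * (p + 3) ≤ n) :
    (1 + 1 / (n : ℝ)) * ((T n p / ((n - 3).choose p : ℝ)) *
      (T n (p + 2) / ((n - 3).choose (p + 2) : ℝ))) ≤
      (T n (p + 1) / ((n - 3).choose (p + 1) : ℝ)) ^ 2 := by
  have hn' : (1000 : ℝ) ≤ n := by exact_mod_cast hn
  have hp' : 9 * ((p : ℝ) + 3) ≤ n := by exact_mod_cast hp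
  have hp0 : (0 : ℝ) ≤ p := by positivity
  have hc0 : (0 : ℝ) < (n - 3).choose p := by exact_mod_cast Nat.choose_pos (by omega)
  have hc1 : (0 : ℝ) < (n - 3).choose (p + 1) := by exact_mod_cast Nat.choose_pos (by omega)
  have hc2 : (0 : ℝ) < (n - 3).choose (p + 2) := by exact_mod_cast Nat.choose_pos (by omega)
  have r1 : ((n - 3).choose (p + 1) : ℝ) * (p + 1) = (n - 3).choose p * (n - 3 - p) := by
    have := Nat.choose_succ_right_eq (n - 3) p
    have h : ((n - 3 - p : ℕ) : ℝ) = n - 3 - p := by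
      rw [Nat.cast_sub (by omega), Nat.cast_sub (by omega)]; norm_num
    rw [← h]; exact_mod_cast this
  have r2 : ((n - 3).choose (p + 2) : ℝ) * (p + 2) = (n - 3).choose (p + 1) * (n - 4 - p) := by
    have := Nat.choose_succ_right_eq (n - 3) (p + 1)
    have h : ((n - 3 - (p + 1) : ℕ) : ℝ) = n - 4 - p := by
      rw [Nat.cast_sub (by omega), Nat.cast_sub (by omega)]; push_cast; ring
    rw [← h]; exact_mod_cast this
  have hT := T_log_concave (n := n) (p := p) (by omega)
  set c0 : ℝ := ((n - 3).choose p : ℝ)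
  set c1 : ℝ := ((n - 3).choose (p + 1) : ℝ)
  set c2 : ℝ := ((n - 3).choose (p + 2) : ℝ)
  set X := T n p * T n (p + 2) with hX
  have hX0 : 0 < X := mul_pos (T_pos _ _) (T_pos _ _)
  have hd3 : (0 : ℝ) < n - 3 - p := by linarith
  have hd4 : (0 : ℝ) < n - 4 - p := by linarith
  have hcc : c0 * c2 * ((p + 2) * (n - 3 - p)) = c1 ^ 2 * ((p + 1) * (n - 4 - p)) := by
    linear_combination (c0 * (n - 3 - p)) * r2 - (c1 * (n - 4 - p)) * r1
  -- With `u = p + 3` this is `(1 + 1/n) u² ≤ (u² + n - 4 - u) (1 - 1/(n - u))`, where `u ≤ n/9`.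
  have hkey : (n + 1 : ℝ) * ((p + 3) ^ 2 * (n - 3 - p)) ≤
      n * (((p + 1) * (p + 3) + (p + n - 1)) * (n - 4 - p)) := by
    obtain ⟨u, hu⟩ : ∃ u : ℝ, u = p + 3 := ⟨_, rfl⟩
    have e : (p : ℝ) = u - 3 := by linarith
    rw [e] at hp' hp0 ⊢
    have hu2 : 2 * u ^ 2 ≤ (n - 4 - u) * (n - 1 - u) := by
      calc 2 * u ^ 2 = (2 * u) * u := by ring
        _ ≤ _ := mul_le_mul (by linarith) (by linarith) (by linarith) (by linarith)
    have h5 := mul_le_mul_of_nonneg_left hu2 (by linarith : (0 : ℝ) ≤ n)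
    have h6 : 0 ≤ u * u ^ 2 := mul_nonneg (by linarith) (sq_nonneg u)
    linarith
  rw [div_mul_div_comm, div_pow, ← hX, ← mul_div_assoc, div_le_div_iff₀ (by positivity) (by positivity)]
  have hmul : (0 : ℝ) < n * ((p + 2) * (n - 3 - p)) * (p + 3) ^ 2 := by positivity
  refine le_of_mul_le_mul_right ?_ hmul
  calc (1 + 1 / (n : ℝ)) * X * c1 ^ 2 * (n * ((p + 2) * (n - 3 - p)) * (p + 3) ^ 2)
      = (X * c1 ^ 2 * (p + 2)) * ((n + 1 : ℝ) * ((p + 3) ^ 2 * (n - 3 - p))) := by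
        field_simp
    _ ≤ (X * c1 ^ 2 * (p + 2)) * (n * (((p + 1) * (p + 3) + (p + n - 1)) * (n - 4 - p))) := by
        gcongr
    _ = (X * ((p + 2) * ((p + 1) * (p + 3) + (p + n - 1)))) * (c1 ^ 2 * n * (n - 4 - p)) := by ring
    _ ≤ (T n (p + 1) ^ 2 * ((p + 1) * (p + 3) ^ 2)) * (c1 ^ 2 * n * (n - 4 - p)) := by gcongr
    _ = T n (p + 1) ^ 2 * n * (p + 3) ^ 2 * (c1 ^ 2 * ((p + 1) * (n - 4 - p))) := by ring
    _ = _ := by rw [← hcc]; ring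

/-- **Theorem (improved log-concavity range).** There is an (effectively computable)
constant `N > 0` such that for all integers `n > N` and `2 ≤ l ≤ n / (10 log n)`,
`(a(n,l-1)/C(n-3,l-1))² ≥ (a(n,l-2)/C(n-3,l-2)) · (a(n,l)/C(n-3,l))`. -/
theorem stmt0 :
    ∃ N : ℕ, 0 < N ∧ ∀ n l : ℕ, N < n → 2 ≤ l →
      (l : ℝ) ≤ (n : ℝ) / (10 * Real.log n) →
      (a n (l - 1) / ((n - 3).choose (l - 1) : ℝ)) ^ 2 ≥
        (a n (l - 2) / ((n - 3).choose (l - 2) : ℝ)) *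
          (a n l / ((n - 3).choose l : ℝ)) := by
  have hev : ∀ᶠ x : ℝ in Filter.atTop, Real.log x ≤ x / 100 := by
    have := Real.isLittleO_log_id_atTop.bound (show (0 : ℝ) < 1 / 100 by norm_num)
    filter_upwards [this, Filter.eventually_ge_atTop 0] with x hx h0
    simp only [id, Real.norm_eq_abs, abs_of_nonneg h0] at hx
    linarith [le_abs_self (Real.log x)]
  obtain ⟨N, hN⟩ := Filter.eventually_atTop.1 (tendsto_natCast_atTop_atTop.eventually hev)
  refine ⟨max N 1000, by positivity, fun n l hn hl hln => ?_⟩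
  have hnN : N ≤ n := (le_max_left _ _).trans hn.le
  have hn1000 : 1000 ≤ n := (le_max_right N 1000).trans hn.le
  have hn' : (1000 : ℝ) ≤ n := by exact_mod_cast hn1000
  have hlog := hN n hnN
  have hlog1 : 1 ≤ Real.log n := by
    rw [Real.le_log_iff_exp_le (by linarith)]
    linarith [Real.exp_one_lt_d9]
  have hll : 10 * (l : ℝ) * Real.log n ≤ n := by
    rw [le_div_iff₀ (by positivity)] at hln
    linarith
  obtain ⟨p, rfl⟩ : ∃ p, l = p + 2 := ⟨l - 2, by omega⟩
  have hp9 : 9 * ((p + 2 : ℕ) + 1 : ℝ) * Real.log n ≤ n - 1 := by nlinarith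
  have hpn : 9 * (p + 3) ≤ n := by
    have : 9 * ((p : ℝ) + 3) ≤ n := by
      push_cast at hp9
      have hp0 : (0 : ℝ) ≤ p := by positivity
      nlinarith
    exact_mod_cast this
  have hle : ∀ q : ℕ, q ≤ p + 2 → |a n q - T n q| ≤ T n q / (n : ℝ) ^ 3 := by
    intro q hq
    refine abs_a_sub_T_le hn1000 (by omega) (le_trans ?_ hp9)
    have : (q : ℝ) ≤ (p + 2 : ℕ) := by exact_mod_cast hq
    gcongr
  have hU := T_ultra hn1000 hpn
  have hrel : ∀ q : ℕ, q ≤ p + 2 →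
      (1 - 1 / (n : ℝ) ^ 3) * (T n q / ((n - 3).choose q : ℝ)) ≤ a n q / ((n - 3).choose q : ℝ) ∧
      a n q / ((n - 3).choose q : ℝ) ≤ (1 + 1 / (n : ℝ) ^ 3) * (T n q / ((n - 3).choose q : ℝ)) ∧
      0 < T n q / ((n - 3).choose q : ℝ) := by
    intro q hq
    have hc : (0 : ℝ) < (n - 3).choose q := by exact_mod_cast Nat.choose_pos (by omega)
    have h := abs_le.1 (hle q hq)
    rw [mul_div_assoc', mul_div_assoc']
    refine ⟨?_, ?_, div_pos (T_pos _ _) hc⟩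
    · gcongr
      have : (1 - 1 / (n : ℝ) ^ 3) * T n q = T n q - T n q / (n : ℝ) ^ 3 := by ring
      linarith [h.1]
    · gcongr
      have : (1 + 1 / (n : ℝ) ^ 3) * T n q = T n q + T n q / (n : ℝ) ^ 3 := by ring
      linarith [h.2]
  have hδ0 : 0 < 1 / (n : ℝ) ^ 3 := by positivity
  have hδ : 1 / (n : ℝ) ^ 3 ≤ 1 / (n : ℝ) / 1000000 := by
    rw [div_div]
    gcongr
    nlinarith [mul_self_nonneg (n : ℝ), mul_le_mul hn' hn' (by norm_num) (by linarith)]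
  have hε : 1 / (n : ℝ) ≤ 1 / 1000 := by gcongr
  obtain ⟨_, h0, u0⟩ := hrel p (by omega)
  obtain ⟨h1, _, u1⟩ := hrel (p + 1) (by omega)
  obtain ⟨h2', h2, u2⟩ := hrel (p + 2) le_rfl
  rw [show p + 2 - 1 = p + 1 by omega, show p + 2 - 2 = p by omega]
  generalize T n p / ((n - 3).choose p : ℝ) = U0 at *
  generalize T n (p + 1) / ((n - 3).choose (p + 1) : ℝ) = U1 at *
  generalize T n (p + 2) / ((n - 3).choose (p + 2) : ℝ) = U2 at *
  generalize a n p / ((n - 3).choose p : ℝ) = A0 at *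
  generalize a n (p + 1) / ((n - 3).choose (p + 1) : ℝ) = A1 at *
  generalize a n (p + 2) / ((n - 3).choose (p + 2) : ℝ) = A2 at *
  generalize 1 / (n : ℝ) ^ 3 = δ at *
  generalize 1 / (n : ℝ) = ε at *
  have hA2 : 0 ≤ A2 := le_trans (mul_nonneg (by linarith) u2.le) h2'
  have hU02 : 0 < U0 * U2 := mul_pos u0 u2
  -- `(1 + δ)² ≤ (1 - δ)² (1 + ε)` since `δ ≤ ε / 10⁶`.
  have hδε : (1 + δ) ^ 2 ≤ (1 - δ) ^ 2 * (1 + ε) := by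
    have h3 : 1 / 2 ≤ (1 - δ) ^ 2 := by nlinarith
    have h4 : 1 / 2 * ε ≤ (1 - δ) ^ 2 * ε := mul_le_mul_of_nonneg_right h3 (by linarith)
    linarith
  calc A0 * A2 ≤ ((1 + δ) * U0) * ((1 + δ) * U2) :=
        mul_le_mul h0 h2 hA2 (mul_nonneg (by linarith) u0.le)
    _ = (1 + δ) ^ 2 * (U0 * U2) := by ring
    _ ≤ (1 - δ) ^ 2 * (1 + ε) * (U0 * U2) := by gcongr
    _ = (1 - δ) ^ 2 * ((1 + ε) * (U0 * U2)) := by ring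
    _ ≤ (1 - δ) ^ 2 * U1 ^ 2 := by gcongr
    _ = ((1 - δ) * U1) ^ 2 := by ring
    _ ≤ A1 ^ 2 := by
        have : 0 ≤ (1 - δ) * U1 := mul_nonneg (by linarith) u1.le
        gcongr
end

section
/- For every integer l ≥ 2 there exists N = N(l) such that for all integers n > N, (a(n,l-2)/C(n-3,l-2))·(a(n,l)/C(n-3,l)) ≤ (a(n,l-1)/C(n-3,l-1))², where C(n-3,j) denotes the binomial coefficient. -/
/-!
The idea is that `a n l` is dominated, for fixed `l` and `n → ∞`, by its summand `k = l`, which is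
exactly `(l+1)^(l+n-1)/(l+1)!`. Every other summand is `(k+1)^n` with `k < l` times a quantity
growing at most polynomially in `n` (`polyGrowth_inner`), so
`a n l / (l+1)^n → (l+1)^l / ((l+1) (l+1)!) > 0` (`tendsto_a_div`).

Hence `a n (l-2) * a n l` grows like `((l-1)(l+1))^n`, while `a n (l-1) ^ 2` grows like `(l²)^n`.
As `(l-1)(l+1) < l²`, the quotient decays exponentially, and the binomial coefficients, which
contribute at most the polynomial factor `n^(2(l-1))`, cannot reverse the inequality.
-/

open Finset Real

open Filter Topology Asymptotics

/-- A sequence grows at most polynomially: it is `O(n^d)` for some `d`. -/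
def PolyGrowth (f : ℕ → ℝ) : Prop :=
  ∃ d : ℕ, f =O[atTop] fun n : ℕ => (n : ℝ) ^ d

lemma PolyGrowth.mul {f g : ℕ → ℝ} (hf : PolyGrowth f) (hg : PolyGrowth g) :
    PolyGrowth fun n => f n * g n := by
  obtain ⟨d, hd⟩ := hf
  obtain ⟨e, he⟩ := hg
  refine ⟨d + e, ?_⟩
  simpa only [pow_add] using hd.mul he

lemma isBigO_pow_of_le {d e : ℕ} (h : d ≤ e) :
    (fun n : ℕ => (n : ℝ) ^ d) =O[atTop] fun n : ℕ => (n : ℝ) ^ e := by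
  refine IsBigO.of_bound 1 ?_
  filter_upwards [eventually_ge_atTop 1] with n hn
  have hn' : (1 : ℝ) ≤ n := by exact_mod_cast hn
  rw [one_mul, Real.norm_of_nonneg (by positivity), Real.norm_of_nonneg (by positivity)]
  exact pow_le_pow_right₀ hn' h

lemma PolyGrowth.add {f g : ℕ → ℝ} (hf : PolyGrowth f) (hg : PolyGrowth g) :
    PolyGrowth fun n => f n + g n := by
  obtain ⟨d, hd⟩ := hf
  obtain ⟨e, he⟩ := hg
  exact ⟨max d e, (hd.trans (isBigO_pow_of_le (le_max_left d e))).add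
    (he.trans (isBigO_pow_of_le (le_max_right d e)))⟩

lemma polyGrowth_const (c : ℝ) : PolyGrowth fun _ => c :=
  ⟨0, by simpa using isBigO_const_const c (one_ne_zero (α := ℝ)) (atTop : Filter ℕ)⟩

lemma polyGrowth_id : PolyGrowth fun n => (n : ℝ) :=
  ⟨1, by simpa using isBigO_refl _ _⟩

lemma PolyGrowth.sub {f g : ℕ → ℝ} (hf : PolyGrowth f) (hg : PolyGrowth g) :
    PolyGrowth fun n => f n - g n := by
  simpa [sub_eq_add_neg] using hf.add ((polyGrowth_const (-1)).mul hg)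

lemma PolyGrowth.sum {ι : Type*} (s : Finset ι) {f : ι → ℕ → ℝ}
    (hf : ∀ i ∈ s, PolyGrowth (f i)) : PolyGrowth fun n => ∑ i ∈ s, f i n := by
  classical
  induction s using Finset.induction_on with
  | empty => simpa using polyGrowth_const 0
  | insert i s hi ih =>
    simp only [Finset.sum_insert hi]
    exact (hf i (by simp)).add (ih fun j hj => hf j (by simp [hj]))

lemma PolyGrowth.prod {ι : Type*} (s : Finset ι) {f : ι → ℕ → ℝ}
    (hf : ∀ i ∈ s, PolyGrowth (f i)) : PolyGrowth fun n => ∏ i ∈ s, f i n := by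
  classical
  induction s using Finset.induction_on with
  | empty => simpa using polyGrowth_const 1
  | insert i s hi ih =>
    simp only [Finset.prod_insert hi]
    exact (hf i (by simp)).mul (ih fun j hj => hf j (by simp [hj]))

lemma PolyGrowth.pow {f : ℕ → ℝ} (hf : PolyGrowth f) (i : ℕ) :
    PolyGrowth fun n => f n ^ i := by
  simpa using PolyGrowth.prod (Finset.range i) (f := fun _ => f) fun _ _ => hf

lemma PolyGrowth.of_le {f g : ℕ → ℝ} (hg : PolyGrowth g) (h0 : ∀ n, 0 ≤ f n)
    (h : ∀ n, f n ≤ g n) : PolyGrowth f := by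
  obtain ⟨d, hd⟩ := hg
  refine ⟨d, IsBigO.trans (IsBigO.of_bound 1 (Eventually.of_forall fun n => ?_)) hd⟩
  rw [one_mul, Real.norm_of_nonneg (h0 n), Real.norm_of_nonneg ((h0 n).trans (h n))]
  exact h n

lemma polyGrowth_powerSum (k i : ℕ) :
    PolyGrowth fun n => ∑ j ∈ Finset.range (k + n - 1), (j : ℝ) ^ i := by
  have hg : PolyGrowth fun n : ℕ => ((k : ℝ) + n) * ((k : ℝ) + n) ^ i :=
    ((polyGrowth_const _).add polyGrowth_id).mul (((polyGrowth_const _).add polyGrowth_id).pow i)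
  refine hg.of_le (fun n => by positivity) fun n => ?_
  calc ∑ j ∈ Finset.range (k + n - 1), (j : ℝ) ^ i
      ≤ ∑ j ∈ Finset.range (k + n - 1), ((k : ℝ) + n) ^ i := by
        refine Finset.sum_le_sum fun j hj => ?_
        have hj' : j ≤ k + n := by
          have := Finset.mem_range.mp hj
          omega
        have : (j : ℝ) ≤ k + n := by exact_mod_cast hj'
        gcongr
    _ ≤ ((k : ℝ) + n) * ((k : ℝ) + n) ^ i := by
        rw [Finset.sum_const, Finset.card_range, nsmul_eq_mul]
        have : ((k + n - 1 : ℕ) : ℝ) ≤ k + n := by exact_mod_cast Nat.sub_le (k + n) 1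
        gcongr

lemma polyGrowth_Cnki (k i : ℕ) : PolyGrowth fun n => Cnki n k i := by
  have hc := polyGrowth_const
  have hid := polyGrowth_id
  unfold Cnki
  simp only [div_eq_mul_inv _ ((i : ℝ) * (i + 1))]
  exact (((((hc _).mul (((((hc _).add (hid.mul (hc _))).add (hc _)).add hid).sub (hc _))).add
    (hc _)).sub (hc _)).mul (hc _)).sub ((hc _).mul (polyGrowth_powerSum k i))

lemma polyGrowth_inner (k l : ℕ) : PolyGrowth fun n =>
    ∑ m ∈ Finset.range (l - k + 1), (1 / (Nat.factorial m : ℝ)) *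
      ∑ f ∈ posTuples m (l - k), ∏ j, Cnki n k (f j) :=
  PolyGrowth.sum _ fun _ _ => (polyGrowth_const _).mul <|
    PolyGrowth.sum _ fun f _ => PolyGrowth.prod _ fun j _ => polyGrowth_Cnki k (f j)

lemma PolyGrowth.tendsto_mul_pow {f : ℕ → ℝ} (hf : PolyGrowth f) {r : ℝ} (h0 : 0 ≤ r)
    (h1 : r < 1) : Tendsto (fun n => f n * r ^ n) atTop (𝓝 0) := by
  obtain ⟨d, hd⟩ := hf
  exact (hd.mul (isBigO_refl (fun n : ℕ => r ^ n) atTop)).trans_tendsto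
    (tendsto_pow_const_mul_const_pow_of_abs_lt_one d (by rwa [abs_of_nonneg h0]))

/-- The summand `k = l` of `a n l` has inner sum `1`, coming from the empty tuple. -/
lemma inner_self (n l : ℕ) :
    ∑ m ∈ Finset.range (l - l + 1), (1 / (Nat.factorial m : ℝ)) *
      ∑ f ∈ posTuples m (l - l), ∏ j, Cnki n l (f j) = 1 := by
  simp [posTuples]

/-- The limit of `a n l / (l+1)^n`. -/
noncomputable def leadCoeff (l : ℕ) : ℝ :=
  (l + 1 : ℝ) ^ l / ((l + 1) * (Nat.factorial (l + 1) : ℝ))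

lemma leadCoeff_pos (l : ℕ) : 0 < leadCoeff l := by
  unfold leadCoeff
  positivity

lemma tendsto_a_div (l : ℕ) :
    Tendsto (fun n => a n l / (l + 1 : ℝ) ^ n) atTop (𝓝 (leadCoeff l)) := by
  have key : ∀ n : ℕ, 1 ≤ n → a n l / (l + 1 : ℝ) ^ n =
      (∑ k ∈ Finset.range l, leadCoeff k *
        ((∑ m ∈ Finset.range (l - k + 1), (1 / (Nat.factorial m : ℝ)) *
          ∑ f ∈ posTuples m (l - k), ∏ j, Cnki n k (f j)) *
            ((k + 1 : ℝ) / (l + 1)) ^ n)) + leadCoeff l := by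
    intro n hn
    have hlead : ∀ k : ℕ, (k + 1 : ℝ) ^ (k + n - 1) / (Nat.factorial (k + 1) : ℝ) =
        leadCoeff k * (k + 1 : ℝ) ^ n := by
      intro k
      obtain ⟨p, rfl⟩ : ∃ p, n = p + 1 := ⟨n - 1, by omega⟩
      have : k + (p + 1) - 1 = k + p := by omega
      rw [this, leadCoeff, pow_add, pow_succ]
      field_simp
    have hl0 : (l + 1 : ℝ) ^ n ≠ 0 := by positivity
    unfold a
    rw [Finset.sum_range_succ, inner_self, mul_one, add_div, Finset.sum_div, hlead l,
      mul_div_cancel_right₀ _ hl0]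
    congr 1
    refine Finset.sum_congr rfl fun k _ => ?_
    rw [hlead k, div_pow]
    ring
  have hlim : Tendsto (fun n : ℕ => (∑ k ∈ Finset.range l, leadCoeff k *
        ((∑ m ∈ Finset.range (l - k + 1), (1 / (Nat.factorial m : ℝ)) *
          ∑ f ∈ posTuples m (l - k), ∏ j, Cnki n k (f j)) *
            ((k + 1 : ℝ) / (l + 1)) ^ n)) + leadCoeff l) atTop (𝓝 (0 + leadCoeff l)) := by
    refine Tendsto.add_const _ ?_
    rw [← Finset.sum_const_zero (s := Finset.range l)]
    refine tendsto_finsetSum _ fun k hk => ?_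
    have hkl : (k : ℝ) < l := by exact_mod_cast Finset.mem_range.mp hk
    simpa using ((polyGrowth_inner k l).tendsto_mul_pow (r := (k + 1 : ℝ) / (l + 1))
      (by positivity) (by rw [div_lt_one (by positivity)]; linarith)).const_mul (leadCoeff k)
  rw [zero_add] at hlim
  refine hlim.congr' ?_
  filter_upwards [eventually_ge_atTop 1] with n hn using (key n hn).symm

/-- The inequality with `l = p + 2`, the binomial coefficients replaced by a polynomial factor. -/
lemma eventually_mul_le_sq (p : ℕ) : ∀ᶠ n : ℕ in atTop,
    |a n p * a n (p + 2)| * ((n : ℝ) ^ (p + 1)) ^ 2 ≤ a n (p + 1) ^ 2 := by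
  have h0 := tendsto_a_div p
  have h1 := tendsto_a_div (p + 1)
  have h2 := tendsto_a_div (p + 2)
  push_cast at h1 h2
  have hr1 : ((p + 1 : ℝ) * (p + 2 + 1)) / ((p + 1 + 1) * (p + 1 + 1)) < 1 := by
    rw [div_lt_one (by positivity)]
    nlinarith
  have hr := ((polyGrowth_id.pow (p + 1)).pow 2).tendsto_mul_pow (by positivity) hr1
  have hL := ((h0.mul h2).abs).mul hr
  rw [mul_zero] at hL
  have hR := h1.pow 2
  filter_upwards [hL.eventually_lt hR (pow_pos (leadCoeff_pos _) 2)] with n hn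
  have e1 : (0 : ℝ) < (p + 1 : ℝ) ^ n := by positivity
  have e2 : (0 : ℝ) < (p + 1 + 1 : ℝ) ^ n := by positivity
  have e3 : (0 : ℝ) < (p + 2 + 1 : ℝ) ^ n := by positivity
  -- Both sides of `hn` are the two sides of the goal divided by `(p+2)^(2n)`.
  rw [div_mul_div_comm, abs_div, abs_of_pos (mul_pos e1 e3), div_pow, div_pow, mul_pow, mul_pow,
    lt_div_iff₀ (by positivity)] at hn
  refine le_of_eq_of_le ?_ hn.le
  field_simp

/-- **Theorem (Aluffi–Chen–Marcolli asymptotic log-concavity).** For every `l ≥ 2`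
there exists `N = N(l)` such that for all `n > N`,
`(a(n,l-2)/C(n-3,l-2)) · (a(n,l)/C(n-3,l)) ≤ (a(n,l-1)/C(n-3,l-1))²`. -/
theorem stmt2 (l : ℕ) (hl : 2 ≤ l) :
    ∃ N : ℕ, ∀ n : ℕ, N < n →
      (a n (l - 2) / ((n - 3).choose (l - 2) : ℝ)) *
          (a n l / ((n - 3).choose l : ℝ)) ≤
        (a n (l - 1) / ((n - 3).choose (l - 1) : ℝ)) ^ 2 := by
  obtain ⟨p, rfl⟩ : ∃ p, l = p + 2 := ⟨l - 2, by omega⟩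
  have hp1 : p + 2 - 1 = p + 1 := by omega
  rw [Nat.add_sub_cancel, hp1]
  obtain ⟨M, hM⟩ := eventually_atTop.mp (eventually_mul_le_sq p)
  refine ⟨max M (p + 5), fun n hn => ?_⟩
  have hnM : M ≤ n := ((le_max_left _ _).trans_lt hn).le
  have hnp : p + 5 < n := (le_max_right _ _).trans_lt hn
  have key := hM n hnM
  have b0 : (1 : ℝ) ≤ ((n - 3).choose p : ℝ) := by
    exact_mod_cast Nat.choose_pos (by omega)
  have b1 : (1 : ℝ) ≤ ((n - 3).choose (p + 1) : ℝ) := by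
    exact_mod_cast Nat.choose_pos (by omega)
  have b2 : (1 : ℝ) ≤ ((n - 3).choose (p + 2) : ℝ) := by
    exact_mod_cast Nat.choose_pos (by omega)
  have b1' : ((n - 3).choose (p + 1) : ℝ) ≤ (n : ℝ) ^ (p + 1) := by
    exact_mod_cast (Nat.choose_le_pow (n - 3) (p + 1)).trans
      (Nat.pow_le_pow_left (Nat.sub_le n 3) _)
  rw [div_mul_div_comm, div_pow]
  calc a n p * a n (p + 2) / (((n - 3).choose p : ℝ) * ((n - 3).choose (p + 2) : ℝ))
      ≤ |a n p * a n (p + 2)| / (((n - 3).choose p : ℝ) * ((n - 3).choose (p + 2) : ℝ)) := by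
        gcongr
        exact le_abs_self _
    _ ≤ |a n p * a n (p + 2)| :=
        div_le_self (abs_nonneg _) (one_le_mul_of_one_le_of_one_le b0 b2)
    _ ≤ a n (p + 1) ^ 2 / ((n - 3).choose (p + 1) : ℝ) ^ 2 := by
        rw [le_div_iff₀ (by positivity)]
        refine le_trans ?_ key
        gcongr
end

section
/- There exists a real constant C ≥ 1 such that for all integers n ≥ 3, all integers k with 0 ≤ k ≤ n, and all integers i ≥ 1, one has |C(n,k,i)| ≤ C·n^{i+1}. -/
/-!
The two terms of `C(n,k,i)` are bounded separately. In the first, `k ≤ n` bounds the numerator by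
`3n(i+1) + i ≤ 4n·i(i+1)`, so the quotient is at most `4n ≤ 4n^(i+1)` in absolute value.
In the second, every `j < k + n` satisfies `j ≤ n(k+1)`, so each of the at most `2n` quotients
`j^i / (k+1)^i` is at most `n^i`, and this term is at most `2n^(i+1)`. Hence `C = 6` works.
-/

open Finset Real

lemma abs_rational_term_le (n k i : ℕ) (hn : 3 ≤ n) (hk : k ≤ n) (hi : 1 ≤ i) :
    |((-1 : ℝ) ^ i * (2 * (k : ℝ) * i + n * i + k + n - 1) + (k : ℝ) - i) / (i * (i + 1))|
      ≤ 4 * (n : ℝ) ^ (i + 1) := by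
  have hn' : (3 : ℝ) ≤ n := by exact_mod_cast hn
  have hk' : (k : ℝ) ≤ n := by exact_mod_cast hk
  have hi' : (1 : ℝ) ≤ i := by exact_mod_cast hi
  have hk0 : (0 : ℝ) ≤ k := Nat.cast_nonneg k
  have hpow : (n : ℝ) ≤ (n : ℝ) ^ (i + 1) := le_self_pow₀ (by linarith) (by omega)
  have hki : (k : ℝ) * i ≤ n * i := by gcongr
  have hki0 : 0 ≤ (k : ℝ) * i := by positivity
  have hni : (n : ℝ) ≤ n * i := le_mul_of_one_le_right (by linarith) hi'
  have hin : (i : ℝ) ≤ n * i := le_mul_of_one_le_left (by linarith) (by linarith)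
  have hnii : (n : ℝ) * i ≤ n * i * i := le_mul_of_one_le_right (by linarith) hi'
  have hmain : |(-1 : ℝ) ^ i * (2 * (k : ℝ) * i + n * i + k + n - 1) + (k : ℝ) - i|
      ≤ 4 * n * (i * (i + 1)) := by
    rcases neg_one_pow_eq_or ℝ i with h | h <;> rw [h, abs_le] <;> constructor <;> nlinarith
  rw [abs_div, abs_of_pos (show (0 : ℝ) < i * (i + 1) by positivity),
    div_le_iff₀ (by positivity)]
  refine hmain.trans ?_
  gcongr

lemma abs_power_sum_term_le (n k i : ℕ) (hn : 3 ≤ n) (hk : k ≤ n) (hi : 1 ≤ i) :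
    |(1 / ((i : ℝ) * (k + 1) ^ i)) * ∑ j ∈ Finset.range (k + n - 1), (j : ℝ) ^ i|
      ≤ 2 * (n : ℝ) ^ (i + 1) := by
  have hi' : (1 : ℝ) ≤ i := by exact_mod_cast hi
  have hterm : ∀ j ∈ Finset.range (k + n - 1), (j : ℝ) ^ i ≤ ((n : ℝ) * (k + 1)) ^ i := by
    intro j hj
    rw [Finset.mem_range] at hj
    have hle : j ≤ n * (k + 1) := by nlinarith [Nat.zero_le k, show j ≤ k + n by omega]
    gcongr
    exact_mod_cast hle
  have hcard : ((k + n - 1 : ℕ) : ℝ) ≤ 2 * n := by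
    exact_mod_cast (show k + n - 1 ≤ 2 * n by omega)
  have hsum := Finset.sum_le_card_nsmul _ _ _ hterm
  rw [Finset.card_range, nsmul_eq_mul] at hsum
  rw [abs_of_nonneg (by positivity), one_div_mul_eq_div, div_le_iff₀ (by positivity)]
  calc ∑ j ∈ Finset.range (k + n - 1), (j : ℝ) ^ i
      ≤ 2 * n * ((n : ℝ) * (k + 1)) ^ i := hsum.trans (by gcongr)
    _ = 2 * (n : ℝ) ^ (i + 1) * (1 * (k + 1) ^ i) := by rw [mul_pow]; ring
    _ ≤ 2 * (n : ℝ) ^ (i + 1) * (i * (k + 1) ^ i) := by gcongr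

/-- **Lemma.** There is a real constant `C ≥ 1` such that for all integers `n ≥ 3`,
`0 ≤ k ≤ n`, and `i ≥ 1`, one has `|C(n,k,i)| ≤ C · n^{i+1}`. -/
theorem stmt4 :
    ∃ C : ℝ, 1 ≤ C ∧ ∀ n k i : ℕ, 3 ≤ n → k ≤ n → 1 ≤ i →
      |Cnki n k i| ≤ C * (n : ℝ) ^ (i + 1) := by
  refine ⟨6, by norm_num, fun n k i hn hk hi => ?_⟩
  unfold Cnki
  refine (abs_sub _ _).trans ?_
  linarith [abs_rational_term_le n k i hn hk hi, abs_power_sum_term_le n k i hn hk hi]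
end

section
/- Let n ≥ 3 and k ≥ 0 be integers, let N ≥ 0 be an integer, and let C ≥ 1 be a real number such that |C(n,k,i)| ≤ C·n^{i+1} for every integer i with 1 ≤ i ≤ N. Then |∑_{m=0}^{N} (1/m!)·∑_{i_1+⋯+i_m = N} C(n,k,i_1)⋯C(n,k,i_m)| ≤ (N+1)·(4Cn²)^N, where the inner sum is over m-tuples of positive integers summing to N and the empty product (the m = 0 term, nonzero only when N = 0) equals 1. -/
/-!
Each tuple `(i₁, …, iₘ)` of positive integers with sum `N` has `m ≤ N`, and contributes at most
`∏ C n^(i_j + 1) = C^m n^(N + m) ≤ (C n²)^N` in absolute value (`abs_prod_Cnki_le`), since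
`C, n ≥ 1`. There are at most `2^N` such tuples (`card_posTuples_le`): give each tuple the weight
`∏ 2^(-i_j) = 2^(-N)`; the total weight is at most `(∑_{i ≥ 1} 2^(-i))^m = 1`. As `1/m! ≤ 1`, each
of the `N + 1` values of `m` contributes at most `(2 C n²)^N ≤ (4 C n²)^N`.
-/

open Finset Real

lemma sum_half_pow (N : ℕ) : ∑ i ∈ Finset.Icc 1 N, (1 / 2 : ℝ) ^ i = 1 - (1 / 2) ^ N := by
  induction N with
  | zero => simp
  | succ N ih =>
    rw [Finset.sum_Icc_succ_top (by omega), ih]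
    ring

/-- Weight each tuple by `∏ 2^(-i_j)`: the weight of every member of `posTuples m N` is `2^(-N)`,
while the weights of all tuples with entries in `{1, …, N}` sum to at most `1`. -/
lemma card_posTuples_le (m N : ℕ) : ((posTuples m N).card : ℝ) ≤ 2 ^ N := by
  have h1 : ∑ f ∈ posTuples m N, ∏ j, (1 / 2 : ℝ) ^ f j ≤ 1 := by
    calc ∑ f ∈ posTuples m N, ∏ j, (1 / 2 : ℝ) ^ f j
        ≤ ∑ f ∈ Fintype.piFinset (fun _ : Fin m => Finset.Icc 1 N), ∏ j, (1 / 2 : ℝ) ^ f j :=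
          Finset.sum_le_sum_of_subset_of_nonneg (Finset.filter_subset _ _)
            fun f _ _ => by positivity
      _ = ∏ _j : Fin m, ∑ i ∈ Finset.Icc 1 N, (1 / 2 : ℝ) ^ i :=
          (Finset.prod_univ_sum (fun _ : Fin m => Finset.Icc 1 N) fun _ i => (1 / 2 : ℝ) ^ i).symm
      _ ≤ 1 := by
          rw [sum_half_pow]
          refine Finset.prod_le_one (fun _ _ => ?_) (fun _ _ => ?_)
          · exact sub_nonneg.2 (pow_le_one₀ (by norm_num) (by norm_num))
          · exact sub_le_self _ (by positivity)
  have h2 : ∑ f ∈ posTuples m N, ∏ j, (1 / 2 : ℝ) ^ f j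
      = (posTuples m N).card * (1 / 2 : ℝ) ^ N := by
    rw [← nsmul_eq_mul, ← Finset.sum_const]
    refine Finset.sum_congr rfl fun f hf => ?_
    rw [Finset.prod_pow_eq_pow_sum, (Finset.mem_filter.1 hf).2]
  rw [h2, one_div, inv_pow, ← div_eq_mul_inv, div_le_one (by positivity)] at h1
  exact h1

lemma abs_prod_Cnki_le {n k N m : ℕ} (hn : 1 ≤ n) (hm : m ≤ N) {C : ℝ} (hC : 1 ≤ C)
    (hbound : ∀ i : ℕ, 1 ≤ i → i ≤ N → |Cnki n k i| ≤ C * (n : ℝ) ^ (i + 1))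
    {f : Fin m → ℕ} (hf : f ∈ posTuples m N) :
    |∏ j, Cnki n k (f j)| ≤ (C * (n : ℝ) ^ 2) ^ N := by
  obtain ⟨hmem, hsum⟩ := Finset.mem_filter.1 hf
  have hn' : (1 : ℝ) ≤ n := by exact_mod_cast hn
  calc |∏ j, Cnki n k (f j)| = ∏ j, |Cnki n k (f j)| := Finset.abs_prod _ _
    _ ≤ ∏ j, C * (n : ℝ) ^ (f j + 1) := by
        refine Finset.prod_le_prod (fun _ _ => abs_nonneg _) fun j _ => ?_
        obtain ⟨h1, h2⟩ := Finset.mem_Icc.1 (Fintype.mem_piFinset.1 hmem j)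
        exact hbound _ h1 h2
    _ = C ^ m * (n : ℝ) ^ (N + m) := by
        rw [Finset.prod_mul_distrib, Finset.prod_pow_eq_pow_sum, Finset.sum_add_distrib, hsum]
        simp
    _ ≤ C ^ N * (n : ℝ) ^ (2 * N) := by
        gcongr
        omega
    _ = (C * (n : ℝ) ^ 2) ^ N := by rw [mul_pow, pow_mul]

/-- **Lemma.** If `|C(n,k,i)| ≤ C·n^{i+1}` for `1 ≤ i ≤ N`, then
`|∑_{m=0}^{N} (1/m!) ∑_{i₁+⋯+iₘ=N} C(n,k,i₁)⋯C(n,k,iₘ)| ≤ (N+1)·(4Cn²)^N`. -/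
theorem stmt6 (n k N : ℕ) (hn : 3 ≤ n) (C : ℝ) (hC : 1 ≤ C)
    (hbound : ∀ i : ℕ, 1 ≤ i → i ≤ N → |Cnki n k i| ≤ C * (n : ℝ) ^ (i + 1)) :
    |∑ m ∈ Finset.range (N + 1),
        (1 / (Nat.factorial m : ℝ)) * ∑ f ∈ posTuples m N, ∏ j, Cnki n k (f j)| ≤
      ((N : ℝ) + 1) * (4 * C * (n : ℝ) ^ 2) ^ N := by
  have hterm : ∀ m ∈ Finset.range (N + 1),
      |(1 / (Nat.factorial m : ℝ)) * ∑ f ∈ posTuples m N, ∏ j, Cnki n k (f j)| ≤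
        (4 * C * (n : ℝ) ^ 2) ^ N := by
    intro m hm
    have hm' : m ≤ N := Nat.lt_succ_iff.1 (Finset.mem_range.1 hm)
    have hfac : |1 / (Nat.factorial m : ℝ)| ≤ 1 := by
      rw [abs_of_nonneg (by positivity)]
      exact div_le_one_of_le₀ (by exact_mod_cast Nat.factorial_pos m) (by positivity)
    have hsum : |∑ f ∈ posTuples m N, ∏ j, Cnki n k (f j)| ≤ (4 * C * (n : ℝ) ^ 2) ^ N := by
      calc |∑ f ∈ posTuples m N, ∏ j, Cnki n k (f j)|
          ≤ ∑ f ∈ posTuples m N, |∏ j, Cnki n k (f j)| := Finset.abs_sum_le_sum_abs _ _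
        _ ≤ (posTuples m N).card • (C * (n : ℝ) ^ 2) ^ N :=
            Finset.sum_le_card_nsmul _ _ _ fun f hf =>
              abs_prod_Cnki_le (by omega) hm' hC hbound hf
        _ = (posTuples m N).card * (C * (n : ℝ) ^ 2) ^ N := nsmul_eq_mul _ _
        _ ≤ 4 ^ N * (C * (n : ℝ) ^ 2) ^ N := by
            gcongr
            exact (card_posTuples_le m N).trans (by gcongr; norm_num)
        _ = (4 * C * (n : ℝ) ^ 2) ^ N := by rw [← mul_pow, mul_assoc]
    rw [abs_mul]
    exact (mul_le_of_le_one_left (abs_nonneg _) hfac).trans hsum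
  refine (Finset.abs_sum_le_sum_abs _ _).trans ((Finset.sum_le_card_nsmul _ _ _ hterm).trans_eq ?_)
  rw [Finset.card_range, nsmul_eq_mul]
  push_cast
  rfl
end

section
/- For all integers n ≥ 3 and all integers k, l with 0 ≤ k ≤ l − 1, one has ((k+1)^{k+n−1}/(k+1)!)·((l+1)!/(l+1)^{l+n−1}) ≤ ((k+1)/(l+1))^{n−5/2}·e^{l−k}, where the exponent n − 5/2 is a real exponent of the positive real number (k+1)/(l+1). -/
open Real

/-!
Put `a = k + 1` and `b = l + 1`, and let `s m = m! / (√(2m) (m/e)^m)` be Mathlib's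
`Stirling.stirlingSeq`. Substituting `m! = s m · √(2m) (m/e)^m` for `m = a, b`, the left-hand side
equals `(a/b)^(n - 5/2) · e^(a - b) · s b / s a`. The sequence `s` is antitone on positive integers
(`Stirling.log_stirlingSeq'_antitone`), so `s b / s a ≤ 1`, and `e^(a - b) ≤ 1 ≤ e^(b - a)`.
The computation is carried out after taking logarithms. Monotonicity of `s` takes the place of
the two-sided Robbins bounds.
-/

/-- **Lemma (Stirling-type comparison).** For integers `n ≥ 3` and `0 ≤ k ≤ l − 1`,
`((k+1)^{k+n−1}/(k+1)!) · ((l+1)!/(l+1)^{l+n−1}) ≤ ((k+1)/(l+1))^{n−5/2} · e^{l−k}`,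
where `n − 5/2` is a real exponent. -/
theorem stmt7 (n k l : ℕ) (hn : 3 ≤ n) (hkl : k + 1 ≤ l) :
    ((k + 1 : ℝ) ^ (k + n - 1) / (Nat.factorial (k + 1) : ℝ)) *
        ((Nat.factorial (l + 1) : ℝ) / (l + 1 : ℝ) ^ (l + n - 1)) ≤
      ((k + 1 : ℝ) / (l + 1 : ℝ)) ^ ((n : ℝ) - 5 / 2) *
        Real.exp ((l : ℝ) - k) := by
  have ha : (0 : ℝ) < k + 1 := by positivity
  have hb : (0 : ℝ) < l + 1 := by positivity
  have hfa : (0 : ℝ) < (Nat.factorial (k + 1) : ℝ) := by positivity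
  have hfb : (0 : ℝ) < (Nat.factorial (l + 1) : ℝ) := by positivity
  have hkl' : (k : ℝ) + 1 ≤ l := by exact_mod_cast hkl
  have hs : Real.log (Stirling.stirlingSeq (l + 1)) ≤ Real.log (Stirling.stirlingSeq (k + 1)) :=
    Stirling.log_stirlingSeq'_antitone (show k ≤ l by omega)
  rw [Stirling.log_stirlingSeq_formula, Stirling.log_stirlingSeq_formula] at hs
  push_cast at hs
  rw [Real.log_mul two_ne_zero hb.ne', Real.log_mul two_ne_zero ha.ne',
    Real.log_div hb.ne' (Real.exp_pos 1).ne', Real.log_div ha.ne' (Real.exp_pos 1).ne',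
    Real.log_exp] at hs
  -- The exponents are truncated subtractions in `ℕ`; `3 ≤ n` makes them genuine.
  have hek : ((k + n - 1 : ℕ) : ℝ) = k + n - 1 := by
    rw [Nat.cast_sub (by omega)]; push_cast; ring
  have hel : ((l + n - 1 : ℕ) : ℝ) = l + n - 1 := by
    rw [Nat.cast_sub (by omega)]; push_cast; ring
  rw [← Real.log_le_log_iff (by positivity) (by positivity),
    Real.log_mul (by positivity) (by positivity), Real.log_mul (by positivity) (by positivity),
    Real.log_div (by positivity) (by positivity), Real.log_div (by positivity) (by positivity),
    Real.log_pow, Real.log_pow, Real.log_rpow (by positivity), Real.log_exp,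
    Real.log_div ha.ne' hb.ne', hek, hel]
  linarith
end

section
/- For every real constant C ≥ 1 there exists N > 0 such that for all integers n > N, all integers l with 1 ≤ l ≤ n/(10·log n), and all integers k with 0 ≤ k ≤ l − 1, one has ((k+1)/(l+1))^n·(4eCn²)^{l−k} ≤ exp(−n/(l+1) + log(4eCn²)); that is, the maximum over k of the left-hand side is attained at k = l − 1. -/
/-!
Write `A = 4eCn²` and `j = l - k ≥ 1`. Since `(k+1)/(l+1) = 1 - j/(l+1) ≤ exp (-j/(l+1))`, the
left-hand side is at most `exp (j * (log A - n/(l+1)))`. It remains to see that the bracket is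
nonpositive, so that `j = 1` gives the largest value. For `n ≥ 4eC` one has `A ≤ n³`, hence
`log A ≤ 3 log n`, while `l + 1 ≤ 2l ≤ n / (5 log n)` gives `5 log n ≤ n/(l+1)`.
-/

open Real

/-- **Lemma.** For every real `C ≥ 1` there is `N > 0` such that for all integers
`n > N`, `1 ≤ l ≤ n/(10 log n)` and `0 ≤ k ≤ l − 1`,
`((k+1)/(l+1))^n · (4eCn²)^{l−k} ≤ exp(−n/(l+1) + log(4eCn²))`;
i.e. the maximum over `k` of the left-hand side is attained at `k = l − 1`. -/
theorem stmt8 (C : ℝ) (hC : 1 ≤ C) :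
    ∃ N : ℕ, 0 < N ∧ ∀ n l k : ℕ, N < n → 1 ≤ l →
      (l : ℝ) ≤ (n : ℝ) / (10 * Real.log n) → k + 1 ≤ l →
      ((k + 1 : ℝ) / (l + 1 : ℝ)) ^ n *
          (4 * Real.exp 1 * C * (n : ℝ) ^ 2) ^ (l - k) ≤
        Real.exp (-(n : ℝ) / (l + 1) + Real.log (4 * Real.exp 1 * C * (n : ℝ) ^ 2)) := by
  refine ⟨⌈4 * Real.exp 1 * C⌉₊ + 1, Nat.succ_pos _, ?_⟩
  intro n l k hn hl hln hk
  have hB : 0 < 4 * Real.exp 1 * C := by positivity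
  have hBn : 4 * Real.exp 1 * C ≤ n :=
    (Nat.le_ceil _).trans (by exact_mod_cast (by omega : ⌈4 * Real.exp 1 * C⌉₊ ≤ n))
  have hn1 : (1 : ℝ) < n := by exact_mod_cast (by omega : 1 < n)
  have hlog : 0 < Real.log n := Real.log_pos hn1
  have hl1 : (1 : ℝ) ≤ l := by exact_mod_cast hl
  set A : ℝ := 4 * Real.exp 1 * C * (n : ℝ) ^ 2 with hA
  have hApos : 0 < A := by positivity
  have hlogA : Real.log A ≤ 3 * Real.log n := by
    have h : A ≤ (n : ℝ) ^ 3 := by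
      rw [hA, pow_succ' (n : ℝ) 2]
      gcongr
    simpa using Real.log_le_log hApos h
  have hnl : Real.log A ≤ n / (l + 1) := by
    rw [le_div_iff₀ (by positivity)] at hln ⊢
    nlinarith
  have hj : (1 : ℝ) ≤ ((l - k : ℕ) : ℝ) := by exact_mod_cast (by omega : 1 ≤ l - k)
  have hjc : ((l - k : ℕ) : ℝ) = l - k := Nat.cast_sub (by omega)
  have hbase : (k + 1 : ℝ) / (l + 1) ≤ Real.exp (-((l - k : ℕ) : ℝ) / (l + 1)) := by
    have h := Real.add_one_le_exp (-((l - k : ℕ) : ℝ) / (l + 1))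
    refine le_trans (le_of_eq ?_) h
    rw [hjc]
    field_simp
    ring
  calc ((k + 1 : ℝ) / (l + 1)) ^ n * A ^ (l - k)
      ≤ Real.exp (-((l - k : ℕ) : ℝ) / (l + 1)) ^ n * Real.exp (Real.log A) ^ (l - k) := by
        rw [Real.exp_log hApos]
        gcongr
    _ = Real.exp (((l - k : ℕ) : ℝ) * (Real.log A - n / (l + 1))) := by
        rw [← Real.exp_nat_mul, ← Real.exp_nat_mul, ← Real.exp_add]
        congr 1
        ring
    _ ≤ Real.exp (-(n : ℝ) / (l + 1) + Real.log A) := by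
        apply Real.exp_le_exp.mpr
        rw [neg_div]
        nlinarith
end

section
/- For all integers l ≥ 2 and n ≥ 2, one has ((l−1)/l)·(l²/(l²−1))^{l+n−2} ≥ exp(n/l² − (3l−2)/(l²(l−1))). -/
open Real

/-!
Both factors are bounded below by `1 + t ≤ exp t`: with `t = -1/l²` it gives
`l²/(l²-1) ≥ exp (1/l²)`, and with `t = 1/(l-1)` it gives `(l-1)/l ≥ exp (-1/(l-1))`.
The exponents add up exactly to the claimed one:
`(l+n-2)/l² - 1/(l-1) = n/l² - 2/l² - 1/(l(l-1))`.
-/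

/-- **Lemma.** For all integers `l ≥ 2` and `n ≥ 2`,
`((l−1)/l) · (l²/(l²−1))^{l+n−2} ≥ exp(n/l² − (3l−2)/(l²(l−1)))`. -/
theorem stmt11 (l n : ℕ) (hl : 2 ≤ l) (hn : 2 ≤ n) :
    ((l : ℝ) - 1) / (l : ℝ) * ((l : ℝ) ^ 2 / ((l : ℝ) ^ 2 - 1)) ^ (l + n - 2) ≥
      Real.exp ((n : ℝ) / (l : ℝ) ^ 2 -
        (3 * (l : ℝ) - 2) / ((l : ℝ) ^ 2 * ((l : ℝ) - 1))) := by
  have hcast : ((l + n - 2 : ℕ) : ℝ) = (l : ℝ) + n - 2 := by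
    rw [Nat.cast_sub (by omega)]
    push_cast
    ring
  have hl' : (2 : ℝ) ≤ l := by exact_mod_cast hl
  generalize l + n - 2 = k at *
  generalize (l : ℝ) = x at *
  have hx : 0 < x := by linarith
  have hx1 : 0 < x - 1 := by linarith
  have hx2 : 0 < x ^ 2 - 1 := by nlinarith
  have h1 : Real.exp (-(1 / (x - 1))) ≤ (x - 1) / x := by
    have h := Real.add_one_le_exp (1 / (x - 1))
    have e : 1 / (x - 1) + 1 = x / (x - 1) := by field_simp; ring
    rw [e] at h
    rw [Real.exp_neg, ← inv_div x (x - 1)]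
    exact inv_anti₀ (by positivity) h
  have h2 : Real.exp (1 / x ^ 2) ≤ x ^ 2 / (x ^ 2 - 1) := by
    have h := Real.add_one_le_exp (-(1 / x ^ 2))
    have e : -(1 / x ^ 2) + 1 = (x ^ 2 - 1) / x ^ 2 := by field_simp; ring
    rw [e] at h
    rw [← neg_neg (1 / x ^ 2), Real.exp_neg, ← inv_div (x ^ 2 - 1) (x ^ 2)]
    exact inv_anti₀ (by positivity) h
  have e : (n : ℝ) / x ^ 2 - (3 * x - 2) / (x ^ 2 * (x - 1))
      = -(1 / (x - 1)) + k * (1 / x ^ 2) := by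
    rw [hcast]
    field_simp
    ring
  rw [e, Real.exp_add, Real.exp_nat_mul]
  show _ ≤ _
  gcongr
end
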